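/- Consider sets B ⊆ ℝ² containing the boundary of an axis-parallel square centered at each point of the segment {(t,t) : t ∈ [0,1]}; that is, for every t ∈ [0,1] there exists s(t) > 0 with {y ∈ ℝ² : ‖y − (t,t)‖_∞ = s(t)} ⊆ B. Then: (i) every such set B satisfies dim_P B ≥ 3/2; and (ii) for every ε > 0 there exists a bounded set B ⊆ ℝ² with this property satisfying dim_M B ≤ 3/2 + ε. In particular, the infimum of dim_P B (and of dim_M B over bounded such B) equals 3/2. -/

import Mathlib

open Set Filter Bornology

/-- Covering number of `E` by open balls of radius `ε`. -/
noncomputable def covNum {X : Type*} [PseudoMetricSpace X] (E : Set X) (ε : ℝ) : ℕ∞ :=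
  ⨅ (t : Finset X) (_ : E ⊆ ⋃ x ∈ t, Metric.ball x ε), (t.card : ℕ∞)

/-- Upper Minkowski (box-counting) dimension. -/
noncomputable def dimM {X : Type*} [PseudoMetricSpace X] (E : Set X) : ℝ :=
  limsup (fun ε : ℝ => Real.log ((covNum E ε).toNat) / Real.log (1 / ε))
    (nhdsWithin 0 (Ioi 0))

/-- Packing dimension, as modified upper box dimension: the infimum of
`⨆ j, dimM (E j)` over countable covers of the set by bounded sets. -/
noncomputable def dimP {X : Type*} [PseudoMetricSpace X] (E : Set X) : ℝ :=
  sInf { a : ℝ | ∃ f : ℕ → Set X, (E ⊆ ⋃ j, f j) ∧ (∀ j, IsBounded (f j)) ∧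
    a = ⨆ j, dimM (f j) }

/-- The boundary of the axis-parallel square in the plane with center `c` and half-side `s`,
with respect to the sup norm `‖y - c‖_∞ = max |y 0 - c 0| |y 1 - c 1|`. -/
def squareBdry (c : Fin 2 → ℝ) (s : ℝ) : Set (Fin 2 → ℝ) :=
  { y | max |y 0 - c 0| |y 1 - c 1| = s }

/-- `B ⊆ ℝ²` contains the boundary of an axis-parallel square centered at each point of the
diagonal segment `{(t,t) : t ∈ [0,1]}`. -/
def DiagProp (B : Set (Fin 2 → ℝ)) : Prop :=
  ∀ t ∈ Icc (0 : ℝ) 1, ∃ s > (0 : ℝ), squareBdry ![t, t] s ⊆ B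

/-! Lower bound. If `B` contains a square boundary centered at `(t, t)` with half-side `s`, the
abscissas `t - s` and `t + s` of its vertical sides add up to `2 t`. Cover `B` by countably many
sets with covering numbers `O(ε ^ (-d))`. By Baire's theorem, each vertical segment of `B` has a
subsegment with rational endpoints (in height) inside the closure of one piece. The abscissas of
the segments of a fixed height range in a fixed piece have covering numbers `O(ε ^ (-(d - 1)))`,
so the sum of two such sets of abscissas is null if `2 (d - 1) < 1`. As countably many of these
sums cover `[0, 2]`, this forces `3 / 2 ≤ d`.

Upper bound. The numbers in `[0, 1]` with base `4` digits in `{0, 1}` and those with digits in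
`{0, 2}` form two sets of dimension `1 / 2` whose sum is `[0, 1]`. Hence the coordinates of all
sides can be taken from a set of dimension `1 / 2`, and the sides then lie in a set of dimension
`1 / 2 + 1`. -/

open Metric MeasureTheory
open scoped ENNReal NNReal Topology Pointwise

section CoveringNumbers

variable {X Y : Type*} [PseudoMetricSpace X] [PseudoMetricSpace Y] {E F : Set X} {ε δ : ℝ}

lemma covNum_le_card {t : Finset X} (h : E ⊆ ⋃ x ∈ t, ball x ε) : covNum E ε ≤ t.card :=
  iInf₂_le t h

lemma exists_finset_card_le_covNum (h : covNum E ε ≠ ⊤) :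
    ∃ t : Finset X, E ⊆ (⋃ x ∈ t, ball x ε) ∧ (t.card : ℕ∞) ≤ covNum E ε := by
  have hlt : covNum E ε < covNum E ε + 1 := (ENat.lt_add_one_iff h).2 le_rfl
  obtain ⟨t, hlt⟩ := iInf_lt_iff.1 hlt
  obtain ⟨ht, hcard⟩ := iInf_lt_iff.1 hlt
  exact ⟨t, ht, (ENat.lt_add_one_iff h).1 hcard⟩

lemma covNum_mono (h : E ⊆ F) : covNum E ε ≤ covNum F ε :=
  le_iInf₂ fun _ ht => covNum_le_card (h.trans ht)

lemma covNum_union_le (E F : Set X) (ε : ℝ) : covNum (E ∪ F) ε ≤ covNum E ε + covNum F ε := by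
  classical
  by_cases hE : covNum E ε = ⊤
  · simp [hE]
  by_cases hF : covNum F ε = ⊤
  · simp [hF]
  obtain ⟨t, ht, htcard⟩ := exists_finset_card_le_covNum hE
  obtain ⟨u, hu, hucard⟩ := exists_finset_card_le_covNum hF
  calc covNum (E ∪ F) ε ≤ (t ∪ u).card := covNum_le_card <| by
        rw [Finset.set_biUnion_union]; exact union_subset_union ht hu
    _ ≤ t.card + u.card := mod_cast Finset.card_union_le t u
    _ ≤ covNum E ε + covNum F ε := add_le_add htcard hucard

lemma covNum_image_le {f : X → Y} {K : ℝ≥0} (hf : LipschitzWith K f) (hK : K ≠ 0) (E : Set X)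
    (ε : ℝ) : covNum (f '' E) (K * ε) ≤ covNum E ε := by
  classical
  refine le_iInf₂ fun t ht => ?_
  calc covNum (f '' E) (K * ε) ≤ (t.image f).card := covNum_le_card <| by
        rintro _ ⟨x, hx, rfl⟩
        obtain ⟨c, hc, hxc⟩ := mem_iUnion₂.1 (ht hx)
        exact mem_iUnion₂.2 ⟨f c, Finset.mem_image_of_mem f hc, hf.mapsTo_ball hK c ε hxc⟩
    _ ≤ t.card := mod_cast Finset.card_image_le

lemma covNum_closure_le (h : δ < ε) : covNum (closure E) ε ≤ covNum E δ := by
  refine le_iInf₂ fun t ht => covNum_le_card ?_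
  have hclosed : IsClosed (⋃ x ∈ t, closedBall x δ) :=
    t.finite_toSet.isClosed_biUnion fun _ _ => isClosed_closedBall
  calc closure E ⊆ ⋃ x ∈ t, closedBall x δ :=
        closure_minimal (ht.trans (iUnion₂_mono fun _ _ => ball_subset_closedBall)) hclosed
    _ ⊆ ⋃ x ∈ t, ball x ε := iUnion₂_mono fun _ _ => closedBall_subset_ball h

lemma covNum_pi_le {ι : Type*} [Fintype ι] {X : ι → Type*} [∀ i, PseudoMetricSpace (X i)]
    {E : ∀ i, Set (X i)} (hε : 0 < ε) (hE : ∀ i, covNum (E i) ε ≠ ⊤) :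
    covNum (univ.pi E) ε ≤ ∏ i, covNum (E i) ε := by
  classical
  choose t ht hcard using fun i => exists_finset_card_le_covNum (hE i)
  calc covNum (univ.pi E) ε ≤ (Fintype.piFinset t).card := covNum_le_card fun y hy => by
        choose c hct hyc using fun i => mem_iUnion₂.1 (ht i (hy i (mem_univ i)))
        exact mem_iUnion₂.2 ⟨c, Fintype.mem_piFinset.2 hct, (dist_pi_lt_iff hε).2 hyc⟩
    _ = ∏ i, ((t i).card : ℕ∞) := by simp [Fintype.card_piFinset]
    _ ≤ ∏ i, covNum (E i) ε := Finset.prod_le_prod' fun i _ => hcard i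

lemma disjoint_thickening_of_two_mul_le_dist (h : ∀ x ∈ E, ∀ y ∈ F, 2 * ε ≤ dist x y) :
    Disjoint (thickening ε E) (thickening ε F) := by
  refine Set.disjoint_left.2 fun z hzE hzF => ?_
  obtain ⟨x, hx, hzx⟩ := mem_thickening_iff.1 hzE
  obtain ⟨y, hy, hzy⟩ := mem_thickening_iff.1 hzF
  linarith [h x hx y hy, dist_triangle_left x y z]

-- No ball of radius `ε` meets two sets whose `ε`-thickenings are disjoint.
lemma sum_covNum_le {ι : Type*} {s : Finset ι} {A : ι → Set X} (hA : ∀ i ∈ s, A i ⊆ E)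
    (hdisj : (s : Set ι).PairwiseDisjoint fun i => thickening ε (A i)) :
    ∑ i ∈ s, covNum (A i) ε ≤ covNum E ε := by
  classical
  refine le_iInf₂ fun t ht => ?_
  let u : ι → Finset X := fun i => t.filter (· ∈ thickening ε (A i))
  have hcover : ∀ i ∈ s, A i ⊆ ⋃ x ∈ u i, ball x ε := fun i hi y hy => by
    obtain ⟨x, hx, hyx⟩ := mem_iUnion₂.1 (ht (hA i hi hy))
    exact mem_iUnion₂.2 ⟨x, Finset.mem_filter.2
      ⟨hx, mem_thickening_iff.2 ⟨y, hy, mem_ball'.1 hyx⟩⟩, hyx⟩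
  have hu : (s : Set ι).PairwiseDisjoint u := fun i hi j hj hij =>
    Finset.disjoint_left.2 fun x hxi hxj =>
      (hdisj hi hj hij).le_bot ⟨(Finset.mem_filter.1 hxi).2, (Finset.mem_filter.1 hxj).2⟩
  calc ∑ i ∈ s, covNum (A i) ε ≤ ∑ i ∈ s, ((u i).card : ℕ∞) :=
        Finset.sum_le_sum fun i hi => covNum_le_card (hcover i hi)
    _ = (s.biUnion u).card := by rw [Finset.card_biUnion hu, Nat.cast_sum]
    _ ≤ t.card := mod_cast Finset.card_le_card
        (Finset.biUnion_subset.2 fun i _ => Finset.filter_subset _ t)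

lemma measure_le_covNum_mul [MeasurableSpace X] {μ : Measure X} {c : ℝ≥0∞}
    (hμ : ∀ x, μ (ball x ε) ≤ c) (hE : covNum E ε ≠ ⊤) : μ E ≤ covNum E ε * c := by
  obtain ⟨t, ht, hcard⟩ := exists_finset_card_le_covNum hE
  calc μ E ≤ ∑ x ∈ t, μ (ball x ε) := (measure_mono ht).trans (measure_biUnion_finset_le t _)
    _ ≤ t.card * c := by simpa using Finset.sum_le_sum fun x (_ : x ∈ t) => hμ x
    _ ≤ covNum E ε * c := by gcongr; exact mod_cast ENat.toENNReal_le.2 hcard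

end CoveringNumbers

section CoveringGrowth

variable {X Y : Type*} [PseudoMetricSpace X] [PseudoMetricSpace Y] {E F : Set X} {d e : ℝ}

/-- The covering numbers of `E` are `O(ε ^ (-d))` as `ε → 0⁺`, and in particular finite for small
`ε`. This is how upper bounds on box-counting dimension are handled, free of the junk values of
`dimM` on sets with unbounded quotients. -/
def HasCovGrowth (E : Set X) (d : ℝ) : Prop :=
  ∃ K : ℝ, ∀ᶠ ε in 𝓝[>] (0 : ℝ), (covNum E ε : ℝ≥0∞) ≤ ENNReal.ofReal (K * ε ^ (-d))

namespace HasCovGrowth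

lemma exists_one_le (hE : HasCovGrowth E d) :
    ∃ K : ℝ, 1 ≤ K ∧ ∀ᶠ ε in 𝓝[>] (0 : ℝ),
      (covNum E ε : ℝ≥0∞) ≤ ENNReal.ofReal (K * ε ^ (-d)) := by
  obtain ⟨K, hK⟩ := hE
  refine ⟨max K 1, le_max_right K 1, ?_⟩
  filter_upwards [hK, self_mem_nhdsWithin] with ε hε (hε₀ : 0 < ε)
  exact hε.trans (by gcongr; exact le_max_left K 1)

lemma eventually_covNum_ne_top (hE : HasCovGrowth E d) :
    ∀ᶠ ε in 𝓝[>] (0 : ℝ), covNum E ε ≠ ⊤ := by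
  obtain ⟨K, hK⟩ := hE
  filter_upwards [hK] with ε hε htop
  simp [htop] at hε

lemma of_covNum_mul_le {F : Set Y} {c : ℝ} (hE : HasCovGrowth E d) (hc : 0 < c)
    (h : ∀ ε > 0, covNum F (c * ε) ≤ covNum E ε) : HasCovGrowth F d := by
  obtain ⟨K, hK⟩ := hE
  have hscale : Tendsto (fun ε : ℝ => ε / c) (𝓝[>] 0) (𝓝[>] 0) := by
    refine tendsto_nhdsWithin_iff.2 ⟨?_, ?_⟩
    · exact ((continuous_id.div_const c).tendsto' 0 0 (zero_div c)).mono_left nhdsWithin_le_nhds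
    · filter_upwards [self_mem_nhdsWithin] with ε hε using div_pos hε hc
  refine ⟨K * c ^ d, ?_⟩
  filter_upwards [hscale.eventually hK, self_mem_nhdsWithin] with ε hε (hε₀ : 0 < ε)
  calc (covNum F ε : ℝ≥0∞) ≤ covNum E (ε / c) := by
        have := h (ε / c) (div_pos hε₀ hc)
        rw [mul_div_cancel₀ ε hc.ne'] at this
        exact ENat.toENNReal_le.2 this
    _ ≤ ENNReal.ofReal (K * (ε / c) ^ (-d)) := hε
    _ = ENNReal.ofReal (K * c ^ d * ε ^ (-d)) := by
        rw [Real.div_rpow hε₀.le hc.le, Real.rpow_neg hc.le, div_inv_eq_mul, mul_right_comm,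
          mul_assoc]

lemma mono (hF : HasCovGrowth F d) (h : E ⊆ F) : HasCovGrowth E d :=
  hF.of_covNum_mul_le one_pos fun ε _ => by rw [one_mul]; exact covNum_mono h

protected lemma closure (hE : HasCovGrowth E d) : HasCovGrowth (closure E) d :=
  hE.of_covNum_mul_le two_pos fun ε hε => covNum_closure_le (by linarith)

lemma image {f : X → Y} {K : ℝ≥0} (hf : LipschitzWith K f) (hE : HasCovGrowth E d) :
    HasCovGrowth (f '' E) d := by
  have hpos : 0 < max K 1 := lt_max_of_lt_right one_pos
  exact hE.of_covNum_mul_le (NNReal.coe_pos.2 hpos) fun ε _ =>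
    covNum_image_le (hf.weaken (le_max_left K 1)) hpos.ne' E ε

lemma union (hE : HasCovGrowth E d) (hF : HasCovGrowth F d) : HasCovGrowth (E ∪ F) d := by
  obtain ⟨K, hK₁, hK⟩ := hE.exists_one_le
  obtain ⟨L, hL₁, hL⟩ := hF.exists_one_le
  refine ⟨K + L, ?_⟩
  filter_upwards [hK, hL, self_mem_nhdsWithin] with ε hKε hLε (hε : 0 < ε)
  calc (covNum (E ∪ F) ε : ℝ≥0∞) ≤ covNum E ε + covNum F ε :=
        mod_cast ENat.toENNReal_le.2 (covNum_union_le E F ε)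
    _ ≤ ENNReal.ofReal (K * ε ^ (-d)) + ENNReal.ofReal (L * ε ^ (-d)) := add_le_add hKε hLε
    _ = ENNReal.ofReal ((K + L) * ε ^ (-d)) := by
        rw [add_mul, ENNReal.ofReal_add (by positivity) (by positivity)]

protected lemma pi {ι : Type*} [Fintype ι] {X : ι → Type*} [∀ i, PseudoMetricSpace (X i)]
    {E : ∀ i, Set (X i)} {d : ι → ℝ} (hE : ∀ i, HasCovGrowth (E i) (d i)) :
    HasCovGrowth (univ.pi E) (∑ i, d i) := by
  choose K hK₁ hK using fun i => (hE i).exists_one_le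
  refine ⟨∏ i, K i, ?_⟩
  filter_upwards [eventually_all.2 hK, eventually_all.2 fun i => (hE i).eventually_covNum_ne_top,
    self_mem_nhdsWithin] with ε hKε hfin (hε : 0 < ε)
  calc (covNum (univ.pi E) ε : ℝ≥0∞) ≤ ((∏ i, covNum (E i) ε : ℕ∞) : ℝ≥0∞) :=
        ENat.toENNReal_le.2 (covNum_pi_le hε hfin)
    _ = ∏ i, (covNum (E i) ε : ℝ≥0∞) := map_prod ENat.toENNRealRingHom _ _
    _ ≤ ∏ i, ENNReal.ofReal (K i * ε ^ (-d i)) := Finset.prod_le_prod' fun i _ => hKε i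
    _ = ENNReal.ofReal ((∏ i, K i) * ε ^ (-∑ i, d i)) := by
        rw [← ENNReal.ofReal_prod_of_nonneg fun i _ => by have := hK₁ i; positivity,
          Finset.prod_mul_distrib, ← Finset.sum_neg_distrib, Real.rpow_sum_of_pos hε]

lemma pi_pair {A B : Set X} (hA : HasCovGrowth A d) (hB : HasCovGrowth B e) :
    HasCovGrowth (univ.pi ![A, B]) (d + e) := by
  have h : ∀ i, HasCovGrowth (![A, B] i) (![d, e] i) := Fin.forall_fin_two.2 ⟨hA, hB⟩
  simpa using HasCovGrowth.pi h

lemma add {G : Type*} [SeminormedAddCommGroup G] {A B : Set G} (hA : HasCovGrowth A d)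
    (hB : HasCovGrowth B e) : HasCovGrowth (A + B) (d + e) := by
  have hLip : LipschitzWith (1 + 1) fun x : Fin 2 → G => x 0 + x 1 :=
    (LipschitzWith.eval 0).add (LipschitzWith.eval 1)
  refine (image hLip (hA.pi_pair hB)).mono ?_
  rintro _ ⟨a, ha, b, hb, rfl⟩
  exact ⟨![a, b], by simpa [Fin.forall_fin_two] using ⟨ha, hb⟩, rfl⟩

lemma measure_eq_zero [MeasurableSpace X] {μ : Measure X} {C s : ℝ}
    (hμ : ∀ x, ∀ r > 0, μ (ball x r) ≤ ENNReal.ofReal (C * r ^ s)) (hE : HasCovGrowth E d)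
    (hds : d < s) : μ E = 0 := by
  obtain ⟨K, hK₁, hK⟩ := hE.exists_one_le
  have hbound : ∀ᶠ ε in 𝓝[>] (0 : ℝ), μ E ≤ ENNReal.ofReal (K * C * ε ^ (s - d)) := by
    filter_upwards [hK, hE.eventually_covNum_ne_top, self_mem_nhdsWithin] with ε hKε hfin hε
    replace hε : 0 < ε := hε
    calc μ E ≤ covNum E ε * ENNReal.ofReal (C * ε ^ s) :=
          measure_le_covNum_mul (fun x => hμ x ε hε) hfin
      _ ≤ ENNReal.ofReal (K * ε ^ (-d)) * ENNReal.ofReal (C * ε ^ s) := by gcongr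
      _ = ENNReal.ofReal (K * C * ε ^ (s - d)) := by
          rw [← ENNReal.ofReal_mul (by positivity), sub_eq_neg_add, Real.rpow_add hε]
          ring_nf
  have hlim : Tendsto (fun ε : ℝ => ENNReal.ofReal (K * C * ε ^ (s - d))) (𝓝[>] 0) (𝓝 0) := by
    have hcont : ContinuousAt (fun ε : ℝ => K * C * ε ^ (s - d)) 0 :=
      (Real.continuousAt_rpow_const 0 (s - d) (Or.inr (by linarith))).const_mul _
    have := ENNReal.tendsto_ofReal (hcont.tendsto.mono_left (nhdsWithin_le_nhds (s := Ioi 0)))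
    simpa [Real.zero_rpow (sub_pos.2 hds).ne'] using this
  exact le_antisymm (ge_of_tendsto hlim hbound) zero_le

lemma volume_eq_zero {E : Set ℝ} (hE : HasCovGrowth E d) (hd : d < 1) : volume E = 0 :=
  hE.measure_eq_zero (C := 2) (s := 1) (fun x r _ => by rw [Real.rpow_one, Real.volume_ball]) hd

end HasCovGrowth

end CoveringGrowth

section Dimension

variable {X : Type*} [PseudoMetricSpace X] {E : Set X} {d e : ℝ}

lemma eventually_log_one_div_pos : ∀ᶠ ε in 𝓝[>] (0 : ℝ), 0 < Real.log (1 / ε) := by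
  filter_upwards [Ioo_mem_nhdsGT one_pos] with ε hε
  exact Real.log_pos (one_lt_one_div hε.1 hε.2)

lemma eventually_covNum_log_ratio_nonneg (E : Set X) :
    ∀ᶠ ε in 𝓝[>] (0 : ℝ), 0 ≤ Real.log (covNum E ε).toNat / Real.log (1 / ε) := by
  filter_upwards [eventually_log_one_div_pos] with ε hε
  exact div_nonneg (Real.log_natCast_nonneg _) hε.le

lemma dimM_nonneg (E : Set X) : 0 ≤ dimM E := by
  refine Real.sInf_nonneg fun a ha => ?_
  obtain ⟨ε, hε, hεa⟩ := ((eventually_covNum_log_ratio_nonneg E).and ha).exists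
  exact hε.trans hεa

namespace HasCovGrowth

lemma exists_tendsto_covNum_log_ratio_le (hE : HasCovGrowth E d) (hd : 0 ≤ d) :
    ∃ u : ℝ → ℝ, Tendsto u (𝓝[>] 0) (𝓝 d) ∧
      ∀ᶠ ε in 𝓝[>] (0 : ℝ), Real.log (covNum E ε).toNat / Real.log (1 / ε) ≤ u ε := by
  obtain ⟨K, hK₁, hK⟩ := hE.exists_one_le
  refine ⟨fun ε => Real.log K / Real.log (1 / ε) + d, ?_, ?_⟩
  · have hlog : Tendsto (fun ε : ℝ => Real.log (1 / ε)) (𝓝[>] 0) atTop := by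
      simpa using Real.tendsto_log_nhdsGT_zero
    simpa using (hlog.const_div_atTop (Real.log K)).add_const d
  filter_upwards [hK, Ioo_mem_nhdsGT one_pos, hE.eventually_covNum_ne_top,
    eventually_log_one_div_pos] with ε hKε ⟨hε, hε₁⟩ hfin hlog
  obtain ⟨n, hn⟩ := ENat.ne_top_iff_exists.1 hfin
  rw [← hn, ENat.toENNReal_coe] at hKε
  rw [← hn, ENat.toNat_natCast, div_add' _ _ _ hlog.ne', div_le_div_iff_of_pos_right hlog]
  have hlogn : Real.log n ≤ Real.log (K * ε ^ (-d)) := by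
    rcases n.eq_zero_or_pos with rfl | hn₀
    · rw [Nat.cast_zero, Real.log_zero]
      exact Real.log_nonneg (one_le_mul_of_one_le_of_one_le hK₁
        (Real.one_le_rpow_of_pos_of_le_one_of_nonpos hε hε₁.le (neg_nonpos.2 hd)))
    · exact Real.log_le_log (mod_cast hn₀) ((ENNReal.natCast_le_ofReal hn₀.ne').1 hKε)
  rwa [Real.log_mul (by positivity) (by positivity), Real.log_rpow hε, neg_mul_comm,
    ← Real.log_inv, ← one_div] at hlogn

lemma isBoundedUnder_covNum_log_ratio (hE : HasCovGrowth E d) (hd : 0 ≤ d) :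
    IsBoundedUnder (· ≤ ·) (𝓝[>] (0 : ℝ))
      fun ε => Real.log (covNum E ε).toNat / Real.log (1 / ε) := by
  obtain ⟨u, hu, hle⟩ := hE.exists_tendsto_covNum_log_ratio_le hd
  exact hu.isBoundedUnder_le.mono_le hle

lemma dimM_le (hE : HasCovGrowth E d) (hd : 0 ≤ d) : dimM E ≤ d := by
  obtain ⟨u, hu, hle⟩ := hE.exists_tendsto_covNum_log_ratio_le hd
  calc dimM E ≤ limsup u (𝓝[>] 0) := limsup_le_limsup hle
        (isBoundedUnder_of_eventually_ge (eventually_covNum_log_ratio_nonneg E)).isCoboundedUnder_le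
        hu.isBoundedUnder_le
    _ = d := hu.limsup_eq

lemma of_dimM_lt (hE : HasCovGrowth E d) (hd : 0 ≤ d) (he : dimM E < e) : HasCovGrowth E e := by
  refine ⟨1, ?_⟩
  filter_upwards [eventually_lt_of_limsup_lt he (hE.isBoundedUnder_covNum_log_ratio hd),
    hE.eventually_covNum_ne_top, eventually_log_one_div_pos, self_mem_nhdsWithin]
    with ε hratio hfin hlog hε
  replace hε : 0 < ε := hε
  obtain ⟨n, hn⟩ := ENat.ne_top_iff_exists.1 hfin
  rw [← hn, ENat.toNat_natCast] at hratio
  rw [← hn, ENat.toENNReal_coe, one_mul, ← ENNReal.ofReal_natCast]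
  refine ENNReal.ofReal_le_ofReal (Real.le_rpow_of_log_le hε ?_)
  rw [div_lt_iff₀ hlog] at hratio
  simpa using hratio.le

end HasCovGrowth

lemma dimP_le_dimM (hE : IsBounded E) : dimP E ≤ dimM E := by
  refine csInf_le ⟨0, ?_⟩ ⟨fun _ => E, (iUnion_const E).ge, fun _ => hE, ciSup_const.symm⟩
  rintro _ ⟨f, -, -, rfl⟩
  exact Real.iSup_nonneg fun j => dimM_nonneg (f j)

end Dimension

section DigitSets

variable {b : ℕ} {D D' : Finset (Fin b)}

/-- The real numbers in `[0, 1]` having a base `b` expansion with all digits in `D`. -/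
def digitSet (b : ℕ) (D : Finset (Fin b)) : Set ℝ :=
  Real.ofDigits '' {d : ℕ → Fin b | ∀ i, d i ∈ D}

lemma digitSet_subset_Icc (b : ℕ) (D : Finset (Fin b)) : digitSet b D ⊆ Icc 0 1 := by
  rintro _ ⟨d, -, rfl⟩
  exact ⟨Real.ofDigits_nonneg d, Real.ofDigits_le_one d⟩

lemma covNum_digitSet_le (hD : D.Nonempty) {n : ℕ} {ε : ℝ} (hε : ((b : ℝ) ^ n)⁻¹ < ε) :
    covNum (digitSet b D) ε ≤ (D.card : ℕ∞) ^ n := by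
  classical
  obtain ⟨k, -⟩ := hD
  let extend : (Fin n → Fin b) → ℕ → Fin b := fun w i => if h : i < n then w ⟨i, h⟩ else k
  let words : Finset (Fin n → Fin b) := Fintype.piFinset fun _ => D
  have hcover : digitSet b D ⊆
      ⋃ x ∈ words.image fun w => Real.ofDigits (extend w), ball x ε := by
    rintro _ ⟨d, hd, rfl⟩
    have hword : (fun i : Fin n => d i) ∈ words := Fintype.mem_piFinset.2 fun i => hd i
    refine mem_iUnion₂.2 ⟨_, Finset.mem_image_of_mem _ hword, ?_⟩
    rw [mem_ball, Real.dist_eq]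
    exact (Real.abs_ofDigits_sub_ofDigits_le fun i hi => by simp [extend, hi]).trans_lt hε
  calc covNum (digitSet b D) ε
      ≤ (words.image fun w => Real.ofDigits (extend w)).card := covNum_le_card hcover
    _ ≤ words.card := mod_cast Finset.card_image_le
    _ = (D.card : ℕ∞) ^ n := by simp [words]

lemma hasCovGrowth_digitSet (hb : 1 < b) (hD : D.Nonempty) :
    HasCovGrowth (digitSet b D) (Real.logb b D.card) := by
  set s := Real.logb b D.card
  have hb' : (1 : ℝ) < b := mod_cast hb
  have hcard : (1 : ℝ) ≤ D.card := mod_cast hD.card_pos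
  have hs : 0 ≤ s := Real.logb_nonneg hb' hcard
  have hbs : (b : ℝ) ^ s = D.card := Real.rpow_logb (by positivity) hb'.ne' (by positivity)
  refine ⟨D.card, ?_⟩
  filter_upwards [Ioo_mem_nhdsGT one_pos] with ε hε
  obtain ⟨n, hn, hn'⟩ := exists_nat_pow_near (one_le_inv₀ hε.1 |>.2 hε.2.le) hb'
  have hpow : (D.card : ℝ) ^ (n + 1) ≤ D.card * ε ^ (-s) :=
    calc (D.card : ℝ) ^ (n + 1) = D.card * ((b : ℝ) ^ n) ^ s := by
          rw [pow_succ', ← Real.rpow_pow_comm (by positivity), hbs]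
      _ ≤ D.card * (ε⁻¹) ^ s := by gcongr
      _ = D.card * ε ^ (-s) := by rw [Real.inv_rpow hε.1.le, Real.rpow_neg hε.1.le]
  calc (covNum (digitSet b D) ε : ℝ≥0∞) ≤ (((D.card : ℕ∞) ^ (n + 1) : ℕ∞) : ℝ≥0∞) :=
        ENat.toENNReal_le.2 (covNum_digitSet_le hD (inv_lt_of_inv_lt₀ hε.1 hn'))
    _ = ENNReal.ofReal ((D.card : ℝ) ^ (n + 1)) := by
        rw [ENNReal.ofReal_pow (by positivity), ENNReal.ofReal_natCast]; simp
    _ ≤ ENNReal.ofReal (D.card * ε ^ (-s)) := ENNReal.ofReal_le_ofReal hpow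

lemma Icc_subset_digitSet_univ (hb : 1 < b) : Icc 0 1 ⊆ digitSet b Finset.univ := fun x hx => by
  obtain ⟨d, -, rfl⟩ := Real.ofDigits_SurjOn hb hx
  exact ⟨d, fun i => Finset.mem_univ (d i), rfl⟩

-- The digits are added without carries.
lemma Icc_subset_digitSet_add_digitSet (hb : 1 < b)
    (h : ∀ k : Fin b, ∃ i ∈ D, ∃ j ∈ D', (i : ℕ) + j = k) :
    Icc 0 1 ⊆ digitSet b D + digitSet b D' := fun x hx => by
  obtain ⟨d, -, rfl⟩ := Real.ofDigits_SurjOn hb hx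
  choose u hu v hv huv using h
  refine ⟨_, ⟨fun i => u (d i), fun i => hu (d i), rfl⟩,
    _, ⟨fun i => v (d i), fun i => hv (d i), rfl⟩, ?_⟩
  simp only [Real.ofDigits]
  rw [← Real.summable_ofDigitsTerm.tsum_add Real.summable_ofDigitsTerm]
  refine tsum_congr fun i => ?_
  simp only [Real.ofDigitsTerm, ← add_mul, ← huv (d i), Nat.cast_add]

end DigitSets

section BoundedSets

lemma hasCovGrowth_Icc (a b : ℝ) : HasCovGrowth (Icc a b) 1 := by
  have hunit : HasCovGrowth (Icc (0 : ℝ) 1) 1 := by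
    have := (hasCovGrowth_digitSet one_lt_two (Finset.univ_nonempty (α := Fin 2))).mono
      (Icc_subset_digitSet_univ one_lt_two)
    simpa using this
  refine (hunit.image (lipschitzWith_lineMap a b)).mono ?_
  rw [← segment_eq_image_lineMap, segment_eq_uIcc]
  exact Icc_subset_uIcc

lemma hasCovGrowth_of_isBounded {ι : Type*} [Fintype ι] {E : Set (ι → ℝ)} (hE : IsBounded E) :
    HasCovGrowth E (Fintype.card ι) := by
  obtain ⟨⟨a, ha⟩, ⟨b, hb⟩⟩ := isBounded_iff_bddBelow_bddAbove.1 hE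
  have hbox : HasCovGrowth (univ.pi fun i => Icc (a i) (b i)) (Fintype.card ι) := by
    simpa using HasCovGrowth.pi fun i => hasCovGrowth_Icc (a i) (b i)
  exact hbox.mono fun x hx i _ => ⟨ha hx i, hb hx i⟩

lemma exists_subset_iUnion_hasCovGrowth_of_dimP_lt {ι : Type*} [Fintype ι] {B : Set (ι → ℝ)} {s : ℝ}
    (h : dimP B < s) :
    ∃ d < s, ∃ f : ℕ → Set (ι → ℝ), B ⊆ ⋃ j, f j ∧ ∀ j, HasCovGrowth (f j) d := by
  have hne : {a : ℝ | ∃ f : ℕ → Set (ι → ℝ), (B ⊆ ⋃ j, f j) ∧ (∀ j, IsBounded (f j)) ∧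
      a = ⨆ j, dimM (f j)}.Nonempty :=
    ⟨_, fun j => closedBall 0 j, by simp [iUnion_closedBall_nat], fun _ => isBounded_closedBall,
      rfl⟩
  obtain ⟨_, ⟨f, hBf, hbdd, rfl⟩, hlt⟩ := exists_lt_of_csInf_lt hne h
  obtain ⟨d, hd, hds⟩ := exists_between hlt
  have hgrowth : ∀ j, HasCovGrowth (f j) (Fintype.card ι) := fun j =>
    hasCovGrowth_of_isBounded (hbdd j)
  have hdim : BddAbove (range fun j => dimM (f j)) := by
    refine ⟨Fintype.card ι, ?_⟩
    rintro _ ⟨j, rfl⟩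
    exact (hgrowth j).dimM_le (Nat.cast_nonneg _)
  exact ⟨d, hds, f, hBf, fun j =>
    (hgrowth j).of_dimM_lt (Nat.cast_nonneg _) ((le_ciSup hdim j).trans_lt hd)⟩

end BoundedSets

section Columns

/-- The set of abscissas `x` such that `F` contains the vertical segment `{x} × J`. It locates the
vertical sides of the squares contained in `F`. -/
def columns (F : Set (Fin 2 → ℝ)) (J : Set ℝ) : Set ℝ :=
  {x | ∀ y ∈ J, ![x, y] ∈ F}

lemma mul_covNum_columns_le (F : Set (Fin 2 → ℝ)) {p q ε : ℝ} (hε : 0 < ε) {n : ℕ}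
    (hn : 2 * ε * n ≤ q - p) :
    (n + 1) * covNum (columns F (Icc p q)) ε ≤ covNum F ε := by
  let height : ℕ → ℝ := fun k => p + 2 * ε * k
  let row : ℕ → Set (Fin 2 → ℝ) := fun k => (![·, height k]) '' columns F (Icc p q)
  have hrow : ∀ k ∈ Finset.range (n + 1), row k ⊆ F := by
    rintro k hk _ ⟨x, hx, rfl⟩
    have hkn : (k : ℝ) ≤ n := mod_cast Finset.mem_range_succ_iff.1 hk
    have : 2 * ε * k ≤ 2 * ε * n := by gcongr
    have : 0 ≤ 2 * ε * k := by positivity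
    exact hx _ ⟨by linarith, by linarith⟩
  have hcolumns : ∀ k, covNum (columns F (Icc p q)) ε ≤ covNum (row k) ε := fun k =>
    calc covNum (columns F (Icc p q)) ε = covNum (Function.eval 0 '' row k) ((1 : ℝ≥0) * ε) := by
          simp [row, image_image]
      _ ≤ covNum (row k) ε := covNum_image_le (LipschitzWith.eval 0) one_ne_zero _ _
  have hdisj : (Finset.range (n + 1) : Set ℕ).PairwiseDisjoint fun k => thickening ε (row k) := by
    intro k _ l _ hkl
    refine disjoint_thickening_of_two_mul_le_dist ?_
    rintro _ ⟨x, -, rfl⟩ _ ⟨y, -, rfl⟩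
    have hone : 1 ≤ |(k : ℝ) - l| := by
      have : (1 : ℤ) ≤ |(k : ℤ) - l| := Int.one_le_abs (sub_ne_zero.2 (Nat.cast_injective.ne hkl))
      exact mod_cast this
    calc 2 * ε ≤ 2 * ε * |(k : ℝ) - l| := le_mul_of_one_le_right (by positivity) hone
      _ = |height k - height l| := by
        rw [show height k - height l = 2 * ε * (k - l) by simp only [height]; ring, abs_mul,
          abs_of_pos (by positivity : 0 < 2 * ε)]
      _ ≤ dist ![x, height k] ![y, height l] :=
        dist_le_pi_dist ![x, height k] ![y, height l] 1
  calc (n + 1) * covNum (columns F (Icc p q)) ε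
      = ∑ _k ∈ Finset.range (n + 1), covNum (columns F (Icc p q)) ε := by simp
    _ ≤ ∑ k ∈ Finset.range (n + 1), covNum (row k) ε := Finset.sum_le_sum fun k _ => hcolumns k
    _ ≤ covNum F ε := sum_covNum_le hrow hdisj

protected lemma HasCovGrowth.columns {F : Set (Fin 2 → ℝ)} {d p q : ℝ} (hF : HasCovGrowth F d)
    (hpq : p < q) : HasCovGrowth (columns F (Icc p q)) (d - 1) := by
  obtain ⟨K, hK⟩ := hF
  refine ⟨K * (2 / (q - p)), ?_⟩
  filter_upwards [hK, self_mem_nhdsWithin] with ε hKε hε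
  replace hε : 0 < ε := hε
  have hlen : 0 < (q - p) / (2 * ε) := div_pos (sub_pos.2 hpq) (by positivity)
  let n := ⌊(q - p) / (2 * ε)⌋₊
  have hn : 2 * ε * n ≤ q - p := by
    rw [← le_div_iff₀' (by positivity)]; exact Nat.floor_le hlen.le
  have hmul : (covNum (columns F (Icc p q)) ε : ℝ≥0∞) *
      ENNReal.ofReal ((q - p) / (2 * ε)) ≤ ENNReal.ofReal (K * ε ^ (-d)) :=
    calc (covNum (columns F (Icc p q)) ε : ℝ≥0∞) * ENNReal.ofReal ((q - p) / (2 * ε))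
        ≤ covNum (columns F (Icc p q)) ε * (n + 1) := by
          gcongr
          rw [← Nat.cast_add_one, ← ENNReal.ofReal_natCast, Nat.cast_add_one]
          exact ENNReal.ofReal_le_ofReal (Nat.lt_floor_add_one _).le
      _ ≤ covNum F ε := by
          rw [mul_comm]; exact mod_cast ENat.toENNReal_le.2 (mul_covNum_columns_le F hε hn)
      _ ≤ ENNReal.ofReal (K * ε ^ (-d)) := hKε
  rw [← ENNReal.le_div_iff_mul_le (by simp [hlen]) (by simp), ← ENNReal.ofReal_div_of_pos hlen]
    at hmul
  convert hmul using 2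
  rw [neg_sub, sub_eq_add_neg 1 d, Real.rpow_add hε, Real.rpow_one]
  field_simp

lemma exists_Icc_subset_of_Ioo_subset_iUnion {ι : Type*} [Countable ι] {F : ι → Set ℝ}
    (hF : ∀ i, IsClosed (F i)) {a b : ℝ} (hab : a < b) (h : Ioo a b ⊆ ⋃ i, F i) :
    ∃ (i : ι) (p q : ℚ), p < q ∧ Icc (p : ℝ) q ⊆ F i := by
  obtain ⟨i, x, hx⟩ : ∃ i, (interior (F i)).Nonempty := by
    by_contra! hempty
    have hmeagre : IsMeagre (⋃ i, F i) :=
      isMeagre_iUnion fun i => ((hF i).isNowhereDense_iff.2 (hempty i)).isMeagre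
    exact not_isMeagre_of_isOpen isOpen_Ioo (nonempty_Ioo.2 hab) (hmeagre.mono h)
  obtain ⟨l, u, ⟨hl, hu⟩, hlu⟩ := mem_nhds_iff_exists_Ioo_subset.1 (mem_interior_iff_mem_nhds.1 hx)
  obtain ⟨p, hlp, hpx⟩ := exists_rat_btwn hl
  obtain ⟨q, hxq, hqu⟩ := exists_rat_btwn hu
  exact ⟨i, p, q, mod_cast hpx.trans hxq, fun y hy => hlu ⟨hlp.trans_le hy.1, hy.2.trans_lt hqu⟩⟩

lemma exists_mem_columns_closure {ι : Type*} [Countable ι] {f : ι → Set (Fin 2 → ℝ)} {x a b : ℝ}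
    (hab : a < b) (hx : x ∈ columns (⋃ i, f i) (Icc a b)) :
    ∃ (i : ι) (p q : ℚ), p < q ∧ x ∈ columns (closure (f i)) (Icc p q) := by
  have hcont : Continuous fun y : ℝ => (![x, y] : Fin 2 → ℝ) := by fun_prop
  refine exists_Icc_subset_of_Ioo_subset_iUnion
    (F := fun i => {y | ![x, y] ∈ closure (f i)}) (fun i => isClosed_closure.preimage hcont) hab ?_
  intro y hy
  obtain ⟨i, hi⟩ := mem_iUnion.1 (hx y (Ioo_subset_Icc_self hy))
  exact mem_iUnion.2 ⟨i, subset_closure hi⟩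

end Columns

section LowerBound

variable {B : Set (Fin 2 → ℝ)}

lemma mem_squareBdry_of_abs_eq {c : Fin 2 → ℝ} {s x y : ℝ} (hx : |x - c 0| = s)
    (hy : |y - c 1| ≤ s) : ![x, y] ∈ squareBdry c s := by
  simpa [squareBdry, hx] using hy

lemma DiagProp.exists_mem_columns (hB : DiagProp B) {t : ℝ} (ht : t ∈ Icc (0 : ℝ) 1) :
    ∃ s > 0, t - s ∈ columns B (Icc (t - s) (t + s)) ∧ t + s ∈ columns B (Icc (t - s) (t + s)) := by
  obtain ⟨s, hs, hsB⟩ := hB t ht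
  have hside : ∀ x, |x - t| = s → x ∈ columns B (Icc (t - s) (t + s)) := fun x hx y hy =>
    hsB <| mem_squareBdry_of_abs_eq hx <| by
      rw [abs_sub_comm]; exact mem_Icc_iff_abs_le.2 hy
  exact ⟨s, hs, hside _ (by simp [abs_of_pos hs]), hside _ (by simp [abs_of_pos hs])⟩

theorem DiagProp.three_halves_le_dimP (hB : DiagProp B) : 3 / 2 ≤ dimP B := by
  by_contra! hlt
  obtain ⟨d, hd, f, hBf, hf⟩ := exists_subset_iUnion_hasCovGrowth_of_dimP_lt hlt
  let A : ℕ × {w : ℚ × ℚ // w.1 < w.2} → Set ℝ := fun i =>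
    columns (closure (f i.1)) (Icc i.2.1.1 i.2.1.2)
  have hA : ∀ i, HasCovGrowth (A i) (d - 1) := fun i =>
    (hf i.1).closure.columns (mod_cast i.2.2)
  have hmemA : ∀ {x a b : ℝ}, a < b → x ∈ columns B (Icc a b) → ∃ i, x ∈ A i := by
    intro x a b hab hx
    obtain ⟨j, p, q, hpq, hxj⟩ := exists_mem_columns_closure hab fun y hy => hBf (hx y hy)
    exact ⟨(j, ⟨(p, q), hpq⟩), hxj⟩
  have hcover : Icc (0 : ℝ) 2 ⊆ ⋃ i, ⋃ j, A i + A j := by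
    intro u hu
    obtain ⟨s, hs, hleft, hright⟩ := hB.exists_mem_columns (t := u / 2)
      ⟨by linarith [hu.1], by linarith [hu.2]⟩
    obtain ⟨i, hi⟩ := hmemA (by linarith) hleft
    obtain ⟨j, hj⟩ := hmemA (by linarith) hright
    exact mem_iUnion₂.2 ⟨i, j, _, hi, _, hj, by ring⟩
  have hnull : volume (Icc (0 : ℝ) 2) = 0 :=
    measure_mono_null hcover <| measure_iUnion_null fun i => measure_iUnion_null fun j =>
      ((hA i).add (hA j)).volume_eq_zero (by linarith)
  simp at hnull

end LowerBound

section UpperBound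

/-- The points of `I × I` with a coordinate in `C`: a union of horizontal and vertical segments if
`I` is an interval. It contains every square boundary whose sides have coordinates in `C ⊆ I`. -/
def crossSet (C I : Set ℝ) : Set (Fin 2 → ℝ) :=
  univ.pi ![C, I] ∪ univ.pi ![I, C]

variable {C I : Set ℝ}

lemma isBounded_crossSet (hC : IsBounded C) (hI : IsBounded I) : IsBounded (crossSet C I) :=
  (IsBounded.pi (Fin.forall_fin_two.2 ⟨hC, hI⟩)).union
    (IsBounded.pi (Fin.forall_fin_two.2 ⟨hI, hC⟩))

protected lemma HasCovGrowth.crossSet {d e : ℝ} (hC : HasCovGrowth C d) (hI : HasCovGrowth I e) :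
    HasCovGrowth (crossSet C I) (d + e) :=
  (hC.pi_pair hI).union (add_comm e d ▸ hI.pi_pair hC)

lemma diagProp_crossSet (hI : I.OrdConnected) (hCI : C ⊆ I)
    (hC : ∀ t ∈ Icc (0 : ℝ) 1, ∃ s > 0, t - s ∈ C ∧ t + s ∈ C) : DiagProp (crossSet C I) := by
  intro t ht
  obtain ⟨s, hs, hleft, hright⟩ := hC t ht
  refine ⟨s, hs, fun y hy => ?_⟩
  replace hy : max |y 0 - t| |y 1 - t| = s := hy
  have hmemI : ∀ x, |x - t| ≤ s → x ∈ I := fun x hx =>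
    hI.out (hCI hleft) (hCI hright) (mem_Icc_iff_abs_le.1 (abs_sub_comm x t ▸ hx))
  have hmemC : ∀ x, |x - t| = s → x ∈ C := fun x hx => by
    rcases eq_or_eq_neg_of_abs_eq hx with h | h
    · rwa [show x = t + s by linarith]
    · rwa [show x = t - s by linarith]
  have h₀ : y 0 ∈ I := hmemI _ (hy ▸ le_max_left _ _)
  have h₁ : y 1 ∈ I := hmemI _ (hy ▸ le_max_right _ _)
  rcases max_choice |y 0 - t| |y 1 - t| with h | h
  · exact Or.inl (by simpa [Set.mem_pi, Fin.forall_fin_two] using ⟨hmemC _ (h ▸ hy), h₁⟩)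
  · exact Or.inr (by simpa [Set.mem_pi, Fin.forall_fin_two] using ⟨h₀, hmemC _ (h ▸ hy)⟩)

/-- The coordinates of the sides of an economical family of squares. The left and right sides come
from base `4` Cantor sets of dimension `1 / 2` whose sum is `[0, 1]`; the shifts by `2` keep left
sides and right sides apart, so that all half-sides are positive. -/
def sideSet : Set ℝ :=
  (2 * · - 2) '' digitSet 4 {0, 1} ∪ (2 * · + 2) '' digitSet 4 {0, 2}

lemma hasCovGrowth_sideSet : HasCovGrowth sideSet (1 / 2) := by
  have hdigits : ∀ D : Finset (Fin 4), D.card = 2 → HasCovGrowth (digitSet 4 D) (1 / 2) := by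
    intro D hD
    have hlog : Real.logb 4 2 = 1 / 2 := by
      rw [Real.logb_eq_iff_rpow_eq (by norm_num) (by norm_num) (by norm_num),
        ← Real.sqrt_eq_rpow, show (4 : ℝ) = 2 ^ 2 by norm_num, Real.sqrt_sq zero_le_two]
    have hne : D.Nonempty := Finset.card_pos.1 (hD ▸ two_pos)
    have := hasCovGrowth_digitSet (b := 4) (by norm_num) hne
    rwa [hD, Nat.cast_ofNat, Nat.cast_ofNat, hlog] at this
  have hLip : ∀ c : ℝ, LipschitzWith 2 (2 * · + c) := fun c =>
    LipschitzWith.of_dist_le_mul fun x y => by simp [Real.dist_eq, ← mul_sub, abs_mul]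
  exact ((hdigits {0, 1} rfl).image (hLip (-2))).union ((hdigits {0, 2} rfl).image (hLip 2))

lemma sideSet_subset_Icc : sideSet ⊆ Icc (-2) 4 := by
  rintro _ (⟨x, hx, rfl⟩ | ⟨x, hx, rfl⟩) <;>
  · have := digitSet_subset_Icc _ _ hx
    constructor <;> dsimp only <;> linarith [this.1, this.2]

lemma exists_sub_add_mem_sideSet {t : ℝ} (ht : t ∈ Icc (0 : ℝ) 1) :
    ∃ s > 0, t - s ∈ sideSet ∧ t + s ∈ sideSet := by
  obtain ⟨u, hu, v, hv, rfl⟩ := Icc_subset_digitSet_add_digitSet (b := 4) (D := {0, 1})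
    (D' := {0, 2}) (by norm_num) (by decide) ht
  have := digitSet_subset_Icc _ _ hu
  have := digitSet_subset_Icc _ _ hv
  exact ⟨v - u + 2, by simp_all; linarith, Or.inl ⟨u, hu, by ring⟩, Or.inr ⟨v, hv, by ring⟩⟩

theorem exists_diagProp_dimM_le :
    ∃ B : Set (Fin 2 → ℝ), IsBounded B ∧ DiagProp B ∧ dimM B ≤ 3 / 2 := by
  refine ⟨crossSet sideSet (Icc (-2) 4), ?_, ?_, ?_⟩
  · exact isBounded_crossSet ((isBounded_Icc _ _).subset sideSet_subset_Icc) (isBounded_Icc _ _)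
  · exact diagProp_crossSet ordConnected_Icc sideSet_subset_Icc fun _ => exists_sub_add_mem_sideSet
  · refine HasCovGrowth.dimM_le ?_ (by norm_num)
    convert hasCovGrowth_sideSet.crossSet (hasCovGrowth_Icc (-2) 4) using 1
    norm_num

end UpperBound

/-- Every set containing an axis-parallel square boundary centered at each point of the diagonal
segment `{(t,t) : t ∈ [0,1]}` has packing dimension at least `3/2`; for every `ε > 0` there is
a bounded such set of Minkowski dimension at most `3/2 + ε`; and hence the corresponding
infima of packing (resp. Minkowski, over bounded sets) dimension both equal `3/2`. -/
theorem stmt13 :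
    (∀ B : Set (Fin 2 → ℝ), DiagProp B → (3 : ℝ) / 2 ≤ dimP B) ∧
    (∀ ε > (0 : ℝ), ∃ B : Set (Fin 2 → ℝ), IsBounded B ∧ DiagProp B ∧
      dimM B ≤ 3 / 2 + ε) ∧
    sInf { a : ℝ | ∃ B : Set (Fin 2 → ℝ), DiagProp B ∧ a = dimP B } = 3 / 2 ∧
    sInf { a : ℝ | ∃ B : Set (Fin 2 → ℝ), IsBounded B ∧ DiagProp B ∧ a = dimM B } = 3 / 2 := by
  obtain ⟨B₀, hbdd, hdiag, hdim⟩ := exists_diagProp_dimM_le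
  have hP : dimP B₀ ≤ 3 / 2 := (dimP_le_dimM hbdd).trans hdim
  refine ⟨fun B hB => hB.three_halves_le_dimP, fun ε hε => ⟨B₀, hbdd, hdiag, by linarith⟩, ?_, ?_⟩
  · refine IsLeast.csInf_eq ⟨⟨B₀, hdiag, hdiag.three_halves_le_dimP.antisymm hP⟩, ?_⟩
    rintro _ ⟨B, hB, rfl⟩
    exact hB.three_halves_le_dimP
  · have hle {B : Set (Fin 2 → ℝ)} (hb : IsBounded B) (hB : DiagProp B) : 3 / 2 ≤ dimM B :=
      hB.three_halves_le_dimP.trans (dimP_le_dimM hb)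
    refine IsLeast.csInf_eq ⟨⟨B₀, hbdd, hdiag, (hle hbdd hdiag).antisymm hdim⟩, ?_⟩
    rintro _ ⟨B, hb, hB, rfl⟩
    exact hle hb hB
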